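/- Let φ be a flow on ℝⁿ and let N be an isolating block with exit set L. For every s ≥ 0 the map H : N × [0,1] → N, H(x,u) = f_{us}(x), is a homotopy from the identity of N to f_s which keeps every point of L fixed. Moreover f_s maps N⁻ ∪ L into N⁻ ∪ L, and the restriction of f_s to N⁻ ∪ L is homotopic to the identity of N⁻ ∪ L through a homotopy with values in N⁻ ∪ L that keeps every point of L fixed. -/

import Mathlib

/-!
On `N` the map `f_s` is `x ↦ x · m`, where `m = min (s, τ (x))` is the time at which the orbit of
`x` stops (`stopTime`). This time is characterized by three properties: `0 ≤ m ≤ s`,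
`x [0, m] ⊆ N`, and either `m = s` or `x m ∈ L` (`stopTime_spec`, `stopTime_unique`). Indeed a
point at which an orbit leaves `N` cannot be interior, nor in `∂N ∖ L`, and conversely orbits
leave `N` immediately at points of `L`.

The heart of the matter is that the stopping time is continuous on `N`
(`continuousOn_stopTime`). It is upper semicontinuous because `N` is closed: if `x u ∉ N`, then
`y u ∉ N` for `y` near `x`. It is lower semicontinuous because `L` is closed: if `a < m`, the compact
arc `x [0, a]` misses `L`, so by the tube lemma `y [0, a]` misses `L` for `y` near `x`, and such a
`y ∈ N` cannot stop by time `a`.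

Since the stopping time for `r ≤ s` is the minimum of `r` and the one for `s`, the homotopy is
`H (x, u) = x · min (u s, m (x))`, which is jointly continuous. Points of `L` stop at time `0`, and
moving a point of `N⁻` forward inside `N` keeps it in `N⁻`, so the same formula gives the homotopy
on `N⁻ ∪ L`.
-/

open Set

/-- A flow on `ℝⁿ`: a continuous map `φ : ℝⁿ × ℝ → ℝⁿ` with `φ (x, 0) = x` and
`φ (φ (x, s), t) = φ (x, s + t)`. -/
structure FlowRn (n : ℕ) where
  toFun : (Fin n → ℝ) → ℝ → (Fin n → ℝ)
  continuous_toFun : Continuous fun p : (Fin n → ℝ) × ℝ => toFun p.1 p.2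
  map_zero : ∀ x, toFun x 0 = x
  map_add : ∀ x s t, toFun (toFun x s) t = toFun x (s + t)

variable {n : ℕ}

/-- A set `M` is invariant if `x ℝ ⊆ M` for every `x ∈ M`. -/
def FlowRn.IsInvariant (φ : FlowRn n) (M : Set (Fin n → ℝ)) : Prop :=
  ∀ x ∈ M, ∀ t : ℝ, φ.toFun x t ∈ M

/-- `N⁺ = {x ∈ N : x [0, ∞) ⊆ N}`. -/
def posAsymptotic (φ : FlowRn n) (N : Set (Fin n → ℝ)) : Set (Fin n → ℝ) :=
  {x ∈ N | ∀ t ≥ (0 : ℝ), φ.toFun x t ∈ N}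

/-- `N⁻ = {x ∈ N : x (-∞, 0] ⊆ N}`. -/
def negAsymptotic (φ : FlowRn n) (N : Set (Fin n → ℝ)) : Set (Fin n → ℝ) :=
  {x ∈ N | ∀ t ≤ (0 : ℝ), φ.toFun x t ∈ N}

/-- The exit time `τ (x) = sup {t ≥ 0 : x [0, t] ⊆ N}` of a point `x ∈ N ∖ N⁺`. -/
noncomputable def exitTime (φ : FlowRn n) (N : Set (Fin n → ℝ)) (x : Fin n → ℝ) : ℝ :=
  sSup {t : ℝ | 0 ≤ t ∧ ∀ u ∈ Icc 0 t, φ.toFun x u ∈ N}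

/-- An isolating block `N` (with exit set `L` and entrance set `L'`) for the isolated
invariant compactum `K`. -/
structure IsolatingBlock (φ : FlowRn n) (K N L L' : Set (Fin n → ℝ)) : Prop where
  compact_N : IsCompact N
  compact_K : IsCompact K
  invariant_K : φ.IsInvariant K
  subset_interior : K ⊆ interior N
  maximal : ∀ M ⊆ N, φ.IsInvariant M → M ⊆ K
  compact_L : IsCompact L
  compact_L' : IsCompact L'
  exit_subset : L ⊆ frontier N
  entrance_subset : L' ⊆ frontier N
  boundary_eq : frontier N = L ∪ L'
  entrance_strict : ∀ x ∈ L', ∃ ε > (0 : ℝ), ∀ t ∈ Ico (-ε) (0 : ℝ), φ.toFun x t ∉ N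
  exit_strict : ∀ x ∈ L, ∃ δ > (0 : ℝ), ∀ t ∈ Ioc (0 : ℝ) δ, φ.toFun x t ∉ N
  exit_from_interior : ∀ x ∈ L, ∃ ε > (0 : ℝ), ∀ t ∈ Ico (-ε) (0 : ℝ), φ.toFun x t ∈ interior N
  enter_to_interior :
    ∀ x ∈ frontier N \ L, ∃ δ > (0 : ℝ), ∀ t ∈ Ioc (0 : ℝ) δ, φ.toFun x t ∈ interior N

open Classical in
/-- The map `f_s : N → N`, `f_s (x) = x s` if `x [0, s] ⊆ N` and `f_s (x) = x τ(x)` otherwise. -/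
noncomputable def flowMap (φ : FlowRn n) (N : Set (Fin n → ℝ)) (s : ℝ) (x : Fin n → ℝ) :
    Fin n → ℝ :=
  if ∀ u ∈ Icc (0 : ℝ) s, φ.toFun x u ∈ N then φ.toFun x s else φ.toFun x (exitTime φ N x)

open Classical in
/-- The time `min (s, τ (x))` for which `f_s` moves the point `x` along its orbit. The case split
stands for the minimum because `exitTime` is a junk value on `N⁺`. -/
noncomputable def stopTime (φ : FlowRn n) (N : Set (Fin n → ℝ)) (s : ℝ) (x : Fin n → ℝ) : ℝ :=
  if ∀ u ∈ Icc (0 : ℝ) s, φ.toFun x u ∈ N then s else exitTime φ N x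

theorem flowMap_eq_stopTime (φ : FlowRn n) (N : Set (Fin n → ℝ)) (s : ℝ) (x : Fin n → ℝ) :
    flowMap φ N s x = φ.toFun x (stopTime φ N s x) := by
  unfold flowMap stopTime
  split_ifs <;> rfl

theorem FlowRn.continuous_orbit (φ : FlowRn n) (x : Fin n → ℝ) : Continuous (φ.toFun x) :=
  φ.continuous_toFun.comp (Continuous.prodMk_right x)

theorem FlowRn.continuous_time (φ : FlowRn n) (t : ℝ) : Continuous fun x => φ.toFun x t :=
  φ.continuous_toFun.comp (Continuous.prodMk_left t)

namespace IsolatingBlock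

variable {φ : FlowRn n} {K N L L' : Set (Fin n → ℝ)}

theorem exit_subset_block (hN : IsolatingBlock φ K N L L') : L ⊆ N := fun _ hx =>
  hN.compact_N.isClosed.frontier_subset (hN.exit_subset hx)

/-- Points of `N` outside the exit set stay in `N` for a short time. -/
theorem exists_stay (hN : IsolatingBlock φ K N L L') {x : Fin n → ℝ} (hx : x ∈ N)
    (hxL : x ∉ L) : ∃ δ > (0 : ℝ), ∀ t ∈ Ioc (0 : ℝ) δ, φ.toFun x t ∈ N := by
  by_cases hi : x ∈ interior N
  · have hev : ∀ᶠ t in nhds (0 : ℝ), φ.toFun x t ∈ interior N :=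
      (φ.continuous_orbit x).continuousAt.eventually_mem
        (isOpen_interior.mem_nhds (by rwa [φ.map_zero]))
    obtain ⟨ε, hε, h⟩ := Metric.eventually_nhds_iff.1 hev
    refine ⟨ε / 2, half_pos hε, fun t ht => interior_subset (h ?_)⟩
    rw [Real.dist_eq, sub_zero, abs_of_pos ht.1]
    linarith [ht.2]
  · obtain ⟨δ, hδ, h⟩ := hN.enter_to_interior x ⟨⟨subset_closure hx, hi⟩, hxL⟩
    exact ⟨δ, hδ, fun t ht => interior_subset (h t ht)⟩

/-- The exit time of a point that leaves `N` by time `s` is attained, at a point of `L`. -/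
theorem exitTime_spec (hN : IsolatingBlock φ K N L L') {x : Fin n → ℝ} (hx : x ∈ N) {s : ℝ}
    (hs : ¬ ∀ u ∈ Icc (0 : ℝ) s, φ.toFun x u ∈ N) :
    0 ≤ exitTime φ N x ∧ exitTime φ N x ≤ s ∧
      (∀ u ∈ Icc 0 (exitTime φ N x), φ.toFun x u ∈ N) ∧ φ.toFun x (exitTime φ N x) ∈ L := by
  push Not at hs
  obtain ⟨w, hw, hwN⟩ := hs
  set A : Set ℝ := {t : ℝ | 0 ≤ t ∧ ∀ u ∈ Icc 0 t, φ.toFun x u ∈ N} with hA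
  have hτ : exitTime φ N x = sSup A := rfl
  rw [hτ]
  have hub : w ∈ upperBounds A := by
    intro t ht
    by_contra! hlt
    exact hwN (ht.2 w ⟨hw.1, hlt.le⟩)
  have h0 : (0 : ℝ) ∈ A := by
    refine ⟨le_rfl, fun u hu => ?_⟩
    rw [le_antisymm hu.2 hu.1, φ.map_zero]
    exact hx
  have hτ0 : 0 ≤ sSup A := le_csSup ⟨w, hub⟩ h0
  have hτw : sSup A ≤ w := csSup_le ⟨0, h0⟩ hub
  have hIco : Ico 0 (sSup A) ⊆ φ.toFun x ⁻¹' N := by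
    intro u hu
    obtain ⟨t, ht, hut⟩ := exists_lt_of_lt_csSup ⟨0, h0⟩ hu.2
    exact ht.2 u ⟨hu.1, hut.le⟩
  have hIcc : ∀ u ∈ Icc 0 (sSup A), φ.toFun x u ∈ N := by
    rcases hτ0.eq_or_lt with h | h
    · rw [← h]
      exact h0.2
    · have := closure_minimal hIco (hN.compact_N.isClosed.preimage (φ.continuous_orbit x))
      rwa [closure_Ico h.ne] at this
  refine ⟨hτ0, hτw.trans hw.2, hIcc, ?_⟩
  by_contra hL
  obtain ⟨δ, hδ, h⟩ := hN.exists_stay (hIcc _ ⟨hτ0, le_rfl⟩) hL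
  have hmem : sSup A + δ ∈ A := by
    refine ⟨by linarith, fun u hu => ?_⟩
    rcases le_or_gt u (sSup A) with hle | hlt
    · exact hIcc u ⟨hu.1, hle⟩
    · have := h (u - sSup A) ⟨by linarith, by linarith [hu.2]⟩
      rwa [φ.map_add, add_sub_cancel] at this
  linarith [le_csSup ⟨w, hub⟩ hmem]

theorem stopTime_spec (hN : IsolatingBlock φ K N L L') {x : Fin n → ℝ} (hx : x ∈ N) {s : ℝ}
    (hs : 0 ≤ s) :
    0 ≤ stopTime φ N s x ∧ stopTime φ N s x ≤ s ∧
      (∀ u ∈ Icc 0 (stopTime φ N s x), φ.toFun x u ∈ N) ∧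
      (stopTime φ N s x = s ∨ φ.toFun x (stopTime φ N s x) ∈ L) := by
  unfold stopTime
  split_ifs with h
  · exact ⟨hs, le_rfl, h, Or.inl rfl⟩
  · obtain ⟨h1, h2, h3, h4⟩ := hN.exitTime_spec hx h
    exact ⟨h1, h2, h3, Or.inr h4⟩

/-- An orbit segment contained in `N` can meet `L` only at its right end point. -/
theorem le_of_mem_exit (hN : IsolatingBlock φ K N L L') {x : Fin n → ℝ} {a b : ℝ} (ha : 0 ≤ a)
    (haL : φ.toFun x a ∈ L) (hb : ∀ u ∈ Icc 0 b, φ.toFun x u ∈ N) : b ≤ a := by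
  by_contra! hab
  obtain ⟨δ, hδ, h⟩ := hN.exit_strict _ haL
  have hpos : 0 < min δ (b - a) := lt_min hδ (by linarith)
  refine h _ ⟨hpos, min_le_left _ _⟩ ?_
  rw [φ.map_add]
  exact hb _ ⟨by linarith, by linarith [min_le_right δ (b - a)]⟩

theorem stopTime_unique (hN : IsolatingBlock φ K N L L') {x : Fin n → ℝ} {s t : ℝ}
    (ht0 : 0 ≤ t) (hts : t ≤ s) (htN : ∀ u ∈ Icc 0 t, φ.toFun x u ∈ N)
    (ht : t = s ∨ φ.toFun x t ∈ L) : stopTime φ N s x = t := by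
  have hx : x ∈ N := by simpa [φ.map_zero] using htN 0 ⟨le_rfl, ht0⟩
  obtain ⟨h0, hs, hmN, hm⟩ := hN.stopTime_spec hx (ht0.trans hts)
  apply le_antisymm
  · rcases ht with rfl | hL
    · exact hs
    · exact hN.le_of_mem_exit ht0 hL hmN
  · rcases hm with he | hL
    · rwa [he]
    · exact hN.le_of_mem_exit h0 hL htN

theorem stopTime_of_le (hN : IsolatingBlock φ K N L L') {x : Fin n → ℝ} (hx : x ∈ N) {r s : ℝ}
    (hr : 0 ≤ r) (hrs : r ≤ s) : stopTime φ N r x = min r (stopTime φ N s x) := by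
  obtain ⟨h0, hs, hmN, hm⟩ := hN.stopTime_spec hx (hr.trans hrs)
  refine hN.stopTime_unique (le_min hr h0) (min_le_left _ _)
    (fun u hu => hmN u ⟨hu.1, hu.2.trans (min_le_right _ _)⟩) ?_
  rcases le_or_gt r (stopTime φ N s x) with h | h
  · exact Or.inl (min_eq_left h)
  · rw [min_eq_right h.le]
    exact Or.inr (hm.resolve_left (by linarith))

/-- The exit time truncated at `s` depends continuously on the point of the block. -/
theorem continuousOn_stopTime (hN : IsolatingBlock φ K N L L') {s : ℝ} (hs : 0 ≤ s) :
    ContinuousOn (stopTime φ N s) N := by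
  intro x hx
  obtain ⟨h0, hms, hmN, hm⟩ := hN.stopTime_spec hx hs
  refine tendsto_order.2 ⟨fun a ha => ?_, fun b hb => ?_⟩
  · -- Lower semicontinuity: the arc `x [0, a]` misses the closed set `L`, hence so do nearby arcs.
    have hmiss : ∀ u ∈ Icc 0 a, φ.toFun x u ∉ L := fun u hu hL =>
      absurd (hN.le_of_mem_exit hu.1 hL hmN) (by linarith [hu.2])
    have hev : ∀ᶠ y in nhds x, ∀ u ∈ Icc 0 a, φ.toFun y u ∉ L := by
      refine isCompact_Icc.eventually_forall_of_forall_eventually fun u hu => ?_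
      exact (φ.continuous_toFun.continuousAt (x := (x, u))).eventually_mem
        (hN.compact_L.isClosed.isOpen_compl.mem_nhds (hmiss u hu))
    filter_upwards [nhdsWithin_le_nhds hev, self_mem_nhdsWithin] with y hy hyN
    obtain ⟨hy0, -, -, hyL⟩ := hN.stopTime_spec hyN hs
    by_contra! hle
    exact hy _ ⟨hy0, hle⟩ (hyL.resolve_left (by linarith))
  · -- Upper semicontinuity: just after leaving, the orbit of `x` is in the open complement of `N`.
    rcases lt_or_ge s b with hsb | hbs
    · filter_upwards [self_mem_nhdsWithin] with y hyN
      exact (hN.stopTime_spec hyN hs).2.1.trans_lt hsb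
    · obtain ⟨δ, hδ, h⟩ := hN.exit_strict _ (hm.resolve_left (by linarith))
      set m := stopTime φ N s x
      set t := min δ ((b - m) / 2)
      have ht0 : 0 < t := lt_min hδ (by linarith)
      have htb : t ≤ (b - m) / 2 := min_le_right _ _
      have hout : φ.toFun x (m + t) ∉ N := by
        rw [← φ.map_add]
        exact h t ⟨ht0, min_le_left _ _⟩
      have hev : ∀ᶠ y in nhds x, φ.toFun y (m + t) ∈ Nᶜ :=
        (φ.continuous_time (m + t)).continuousAt.eventually_mem
          (hN.compact_N.isClosed.isOpen_compl.mem_nhds hout)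
      filter_upwards [nhdsWithin_le_nhds hev, self_mem_nhdsWithin] with y hy hyN
      by_contra! hle
      exact hy ((hN.stopTime_spec hyN hs).2.2.1 _ ⟨by linarith, by linarith⟩)

theorem flowMap_mem (hN : IsolatingBlock φ K N L L') {x : Fin n → ℝ} (hx : x ∈ N) {r : ℝ}
    (hr : 0 ≤ r) : flowMap φ N r x ∈ N := by
  obtain ⟨h0, -, hmN, -⟩ := hN.stopTime_spec hx hr
  rw [flowMap_eq_stopTime]
  exact hmN _ ⟨h0, le_rfl⟩

theorem flowMap_zero (hN : IsolatingBlock φ K N L L') {x : Fin n → ℝ} (hx : x ∈ N) :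
    flowMap φ N 0 x = x := by
  obtain ⟨h0, h1, -, -⟩ := hN.stopTime_spec hx le_rfl
  rw [flowMap_eq_stopTime, le_antisymm h1 h0, φ.map_zero]

theorem flowMap_of_mem_exit (hN : IsolatingBlock φ K N L L') {x : Fin n → ℝ} (hx : x ∈ L) {r : ℝ}
    (hr : 0 ≤ r) : flowMap φ N r x = x := by
  have h : stopTime φ N r x = 0 := by
    refine hN.stopTime_unique le_rfl hr (fun u hu => ?_) (Or.inr (by rwa [φ.map_zero]))
    rw [le_antisymm hu.2 hu.1, φ.map_zero]
    exact hN.exit_subset_block hx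
  rw [flowMap_eq_stopTime, h, φ.map_zero]

theorem mapsTo_flowMap (hN : IsolatingBlock φ K N L L') {r : ℝ} (hr : 0 ≤ r) :
    MapsTo (flowMap φ N r) (negAsymptotic φ N ∪ L) (negAsymptotic φ N ∪ L) := by
  rintro x (hx | hx)
  · refine Or.inl ⟨hN.flowMap_mem hx.1 hr, fun t ht => ?_⟩
    obtain ⟨-, -, hmN, -⟩ := hN.stopTime_spec hx.1 hr
    rw [flowMap_eq_stopTime, φ.map_add]
    rcases le_total (stopTime φ N r x + t) 0 with h | h
    · exact hx.2 _ h
    · exact hmN _ ⟨h, by linarith⟩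
  · rw [hN.flowMap_of_mem_exit hx hr]
    exact Or.inr hx

theorem continuousOn_flowMap (hN : IsolatingBlock φ K N L L') {s : ℝ} (hs : 0 ≤ s) :
    ContinuousOn (fun p : (Fin n → ℝ) × ℝ => flowMap φ N (p.2 * s) p.1)
      (N ×ˢ Icc (0 : ℝ) 1) := by
  have hτ : ContinuousOn (fun p : (Fin n → ℝ) × ℝ => stopTime φ N s p.1) (N ×ˢ Icc (0 : ℝ) 1) :=
    (hN.continuousOn_stopTime hs).comp continuousOn_fst fun p hp => hp.1
  have hc : ContinuousOn (fun p : (Fin n → ℝ) × ℝ =>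
      φ.toFun p.1 (min (p.2 * s) (stopTime φ N s p.1))) (N ×ˢ Icc (0 : ℝ) 1) :=
    φ.continuous_toFun.comp_continuousOn
      (continuousOn_fst.prodMk
        (ContinuousOn.inf (continuousOn_snd.mul continuousOn_const) hτ))
  refine hc.congr fun p hp => ?_
  simp only [flowMap_eq_stopTime]
  rw [hN.stopTime_of_le hp.1 (mul_nonneg hp.2.1 hs) (mul_le_of_le_one_left hs hp.2.2)]

end IsolatingBlock

/-- For every `s ≥ 0` the map `H (x, u) = f_{u s} (x)` is a homotopy
(continuous on `N × [0, 1]`, with values in `N`) from the identity of `N` to `f_s` keeping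
every point of `L` fixed; moreover `f_s` maps `N⁻ ∪ L` into itself and its restriction to
`N⁻ ∪ L` is homotopic to the identity of `N⁻ ∪ L` through a homotopy with values in
`N⁻ ∪ L` keeping every point of `L` fixed. -/
theorem flowMap_homotopies (φ : FlowRn n) (K N L L' : Set (Fin n → ℝ))
    (hN : IsolatingBlock φ K N L L') :
    ∀ s ≥ (0 : ℝ),
      (ContinuousOn (fun p : (Fin n → ℝ) × ℝ => flowMap φ N (p.2 * s) p.1)
          (N ×ˢ Icc (0 : ℝ) 1) ∧
        (∀ x ∈ N, ∀ u ∈ Icc (0 : ℝ) 1, flowMap φ N (u * s) x ∈ N) ∧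
        (∀ x ∈ N, flowMap φ N ((0 : ℝ) * s) x = x) ∧
        (∀ x ∈ N, flowMap φ N ((1 : ℝ) * s) x = flowMap φ N s x) ∧
        (∀ x ∈ L, ∀ u ∈ Icc (0 : ℝ) 1, flowMap φ N (u * s) x = x)) ∧
      MapsTo (flowMap φ N s) (negAsymptotic φ N ∪ L) (negAsymptotic φ N ∪ L) ∧
      ∃ G : (Fin n → ℝ) × ℝ → (Fin n → ℝ),
        ContinuousOn G ((negAsymptotic φ N ∪ L) ×ˢ Icc (0 : ℝ) 1) ∧
        (∀ x ∈ negAsymptotic φ N ∪ L, ∀ u ∈ Icc (0 : ℝ) 1,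
          G (x, u) ∈ negAsymptotic φ N ∪ L) ∧
        (∀ x ∈ negAsymptotic φ N ∪ L, G (x, 0) = x) ∧
        (∀ x ∈ negAsymptotic φ N ∪ L, G (x, 1) = flowMap φ N s x) ∧
        (∀ x ∈ L, ∀ u ∈ Icc (0 : ℝ) 1, G (x, u) = x) := by
  intro s hs
  have hpos : ∀ u ∈ Icc (0 : ℝ) 1, 0 ≤ u * s := fun u hu => mul_nonneg hu.1 hs
  have hsub : negAsymptotic φ N ∪ L ⊆ N :=
    union_subset (fun x hx => hx.1) hN.exit_subset_block
  refine ⟨⟨hN.continuousOn_flowMap hs, fun x hx u hu => hN.flowMap_mem hx (hpos u hu),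
    fun x hx => ?_, fun x _ => by rw [one_mul],
    fun x hx u hu => hN.flowMap_of_mem_exit hx (hpos u hu)⟩, hN.mapsTo_flowMap hs,
    fun p => flowMap φ N (p.2 * s) p.1,
    (hN.continuousOn_flowMap hs).mono (prod_mono hsub Subset.rfl),
    fun x hx u hu => hN.mapsTo_flowMap (hpos u hu) hx, fun x hx => ?_,
    fun x _ => by simp only [one_mul],
    fun x hx u hu => hN.flowMap_of_mem_exit hx (hpos u hu)⟩
  · rw [zero_mul]
    exact hN.flowMap_zero hx
  · simp only [zero_mul]
    exact hN.flowMap_zero (hsub hx)
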